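/- arXiv:2601.17338 — 3 statements merged into one kernel-verified Lean document; each statement's English description precedes it below -/
import Mathlib

section
/- Let ω ∈ ℂ be a primitive cube root of unity. Let a₁, a₃, ξ ∈ ℂ satisfy a₃ ≠ 0, a₁³ ≠ 27a₃, ξ ≠ 0, a₁ξ + 3a₃ ≠ 0, and 3ξ³ + a₁²ξ² + 3a₁a₃ξ + 3a₃² = 0. Set d = 3a₁ξ/(a₁ξ + 3a₃) and let M be the 3×3 complex matrix with rows (ωa₁, 2ω+1, (ω−1)a₃), (−(ω+1)a₁, −(2ω+1), (−ω−2)a₃), (a₁ + 3a₃/ξ, 0, 0). Then M is invertible, and for every (X, Y, Z) ∈ ℂ³ with Y²Z + a₁XYZ + a₃YZ² = X³, the triple (X', Y', Z') = M·(X, Y, Z) satisfies X'³ + Y'³ + Z'³ = d·X'Y'Z'. -/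
open Matrix

/-!
Write `c = a₁ + 3a₃/ξ`, so that `M` sends `(X, Y, Z)` to some `(U, V, cX)`, where `U` and `V` do
not involve `c`. The division polynomial equation gives `c³ = a₁³ - 27a₃`, and `dc = 3a₁`, so the
Hessian form at `(U, V, cX)` is `U³ + V³ + (a₁X)³ - 3UV(a₁X) - 27a₃X³`. Without its last term this
is the Hessian form for `d = 3` at `(U, V, a₁X)`. The Hessian cubic for `d = 3` is a triangle: its
form splits into three linear factors, which here are `-3a₃Z`, `-3ω²Y` and `3ω(Y + a₁X + a₃Z)`.
Hence `M` pulls the Hessian form back to `27a₃` times the Weierstrass form.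
-/

section CommRing

variable {R : Type*} [CommRing R]

/-- The form `Y²Z + a₁XYZ + a₃YZ² - X³` whose zero locus is the Weierstrass cubic `E_{a₁,a₃}`,
evaluated at `P = (X, Y, Z)`. -/
def weierstrassForm (a₁ a₃ : R) (P : Fin 3 → R) : R :=
  P 1 ^ 2 * P 2 + a₁ * (P 0 * P 1 * P 2) + a₃ * (P 1 * P 2 ^ 2) - P 0 ^ 3

/-- The form `X³ + Y³ + Z³ - dXYZ` whose zero locus is the Hessian cubic, evaluated at
`P = (X, Y, Z)`. -/
def hessianForm (d : R) (P : Fin 3 → R) : R :=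
  P 0 ^ 3 + P 1 ^ 3 + P 2 ^ 3 - d * (P 0 * P 1 * P 2)

/-- The matrix of the change of coordinates from the Weierstrass to the Hessian cubic. The corner
entry, which is `a₁ + 3a₃/ξ` for a root `ξ` of the division polynomial, is a free parameter `c`, so
that the definition needs no division. -/
def hessianMatrix (ω a₁ a₃ c : R) : Matrix (Fin 3) (Fin 3) R :=
  !![ω * a₁, 2 * ω + 1, (ω - 1) * a₃;
     -(ω + 1) * a₁, -(2 * ω + 1), (-ω - 2) * a₃;
     c, 0, 0]

theorem det_hessianMatrix (ω a₁ a₃ c : R) :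
    (hessianMatrix ω a₁ a₃ c).det = -3 * (2 * ω + 1) * a₃ * c := by
  simp only [hessianMatrix, det_fin_three, of_apply, cons_val]
  ring

theorem hessianMatrix_mulVec (ω a₁ a₃ c : R) (P : Fin 3 → R) :
    hessianMatrix ω a₁ a₃ c *ᵥ P =
      ![ω * a₁ * P 0 + (2 * ω + 1) * P 1 + (ω - 1) * a₃ * P 2,
        -(ω + 1) * a₁ * P 0 + -(2 * ω + 1) * P 1 + (-ω - 2) * a₃ * P 2,
        c * P 0] := by
  ext i
  fin_cases i <;> simp [hessianMatrix, mulVec, dotProduct, Fin.sum_univ_three]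

variable {ω : R}

theorem hessianForm_three_eq_prod (hω : ω ^ 2 + ω + 1 = 0) (U V W : R) :
    hessianForm 3 ![U, V, W] =
      (U + V + W) * (U + ω * V + ω ^ 2 * W) * (U + ω ^ 2 * V + ω * W) := by
  simp only [hessianForm, cons_val]
  linear_combination -(U + V + W) *
    ((ω - 1) * (V ^ 2 + W ^ 2) + U * V + U * W + (ω ^ 2 - ω + 1) * (V * W)) * hω

theorem hessianForm_three_hessianMatrix_mulVec (hω : ω ^ 2 + ω + 1 = 0) (a₁ a₃ : R)
    (P : Fin 3 → R) :
    hessianForm 3 (hessianMatrix ω a₁ a₃ a₁ *ᵥ P) =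
      27 * a₃ * (weierstrassForm a₁ a₃ P + P 0 ^ 3) := by
  have hω_cube : ω ^ 3 = 1 := by linear_combination (ω - 1) * hω
  rw [hessianMatrix_mulVec, hessianForm_three_eq_prod hω]
  set U := ω * a₁ * P 0 + (2 * ω + 1) * P 1 + (ω - 1) * a₃ * P 2 with hU
  set V := -(ω + 1) * a₁ * P 0 + -(2 * ω + 1) * P 1 + (-ω - 2) * a₃ * P 2 with hV
  have hfactor₀ : U + V + a₁ * P 0 = -3 * a₃ * P 2 := by
    rw [hU, hV]
    ring
  have hfactor₁ : U + ω * V + ω ^ 2 * (a₁ * P 0) = -3 * ω ^ 2 * P 1 := by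
    rw [hU, hV]
    linear_combination (P 1 - a₃ * P 2) * hω
  have hfactor₂ : U + ω ^ 2 * V + ω * (a₁ * P 0) = 3 * ω * (P 1 + a₁ * P 0 + a₃ * P 2) := by
    rw [hU, hV]
    linear_combination (-ω * a₁ * P 0 + (1 - 2 * ω) * P 1 - (ω + 1) * a₃ * P 2) * hω
  rw [hfactor₀, hfactor₁, hfactor₂, weierstrassForm]
  linear_combination 27 * a₃ * P 1 * P 2 * (P 1 + a₁ * P 0 + a₃ * P 2) * hω_cube

theorem hessianForm_hessianMatrix_mulVec {a₁ a₃ c d : R} (hω : ω ^ 2 + ω + 1 = 0)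
    (hc : c ^ 3 = a₁ ^ 3 - 27 * a₃) (hd : d * c = 3 * a₁) (P : Fin 3 → R) :
    hessianForm d (hessianMatrix ω a₁ a₃ c *ᵥ P) = 27 * a₃ * weierstrassForm a₁ a₃ P := by
  have h := hessianForm_three_hessianMatrix_mulVec hω a₁ a₃ P
  simp only [hessianMatrix_mulVec, hessianForm, cons_val] at h ⊢
  set U := ω * a₁ * P 0 + (2 * ω + 1) * P 1 + (ω - 1) * a₃ * P 2
  set V := -(ω + 1) * a₁ * P 0 + -(2 * ω + 1) * P 1 + (-ω - 2) * a₃ * P 2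
  linear_combination h + P 0 ^ 3 * hc - U * V * P 0 * hd

end CommRing

section IsDomain

variable {R : Type*} [CommRing R] [IsDomain R] {ω : R}

theorem sq_add_self_add_one_eq_zero_of_isPrimitiveRoot (hω : IsPrimitiveRoot ω 3) :
    ω ^ 2 + ω + 1 = 0 := by
  have h := hω.geom_sum_eq_zero (by norm_num)
  simp only [Finset.sum_range_succ, Finset.sum_range_zero] at h
  linear_combination h

theorem three_ne_zero_of_isPrimitiveRoot (hω : IsPrimitiveRoot ω 3) : (3 : R) ≠ 0 :=
  mod_cast hω.neZero'.ne

end IsDomain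

section Field

variable {K : Type*} [Field K] {ω a₁ a₃ ξ : K}

theorem isUnit_hessianMatrix {c : K} (hω : IsPrimitiveRoot ω 3) (ha₃ : a₃ ≠ 0) (hc : c ≠ 0) :
    IsUnit (hessianMatrix ω a₁ a₃ c) := by
  have h3 : (3 : K) ≠ 0 := three_ne_zero_of_isPrimitiveRoot hω
  have hsq : (2 * ω + 1) ^ 2 = -3 := by
    linear_combination 4 * sq_add_self_add_one_eq_zero_of_isPrimitiveRoot hω
  have hne : 2 * ω + 1 ≠ 0 := fun h ↦
    neg_ne_zero.mpr h3 (by rw [← hsq, h, zero_pow two_ne_zero])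
  rw [isUnit_iff_isUnit_det, det_hessianMatrix, isUnit_iff_ne_zero]
  exact mul_ne_zero (mul_ne_zero (mul_ne_zero (neg_ne_zero.mpr h3) hne) ha₃) hc

theorem add_three_mul_div_cube_eq (hξ : ξ ≠ 0)
    (hdiv : 3 * ξ ^ 3 + a₁ ^ 2 * ξ ^ 2 + 3 * a₁ * a₃ * ξ + 3 * a₃ ^ 2 = 0) :
    (a₁ + 3 * a₃ / ξ) ^ 3 = a₁ ^ 3 - 27 * a₃ := by
  field_simp
  linear_combination 9 * a₃ * hdiv

theorem three_mul_div_mul_add_three_mul_div (hξ : ξ ≠ 0) (hc : a₁ + 3 * a₃ / ξ ≠ 0) :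
    3 * a₁ * ξ / (a₁ * ξ + 3 * a₃) * (a₁ + 3 * a₃ / ξ) = 3 * a₁ := by
  have hden : a₁ * ξ + 3 * a₃ = (a₁ + 3 * a₃ / ξ) * ξ := by field_simp
  rw [hden, mul_div_mul_right _ _ hξ, div_mul_cancel₀ _ hc]

theorem weierstrass_to_hessian_general (hω : IsPrimitiveRoot ω 3) (ha₃ : a₃ ≠ 0)
    (hΔ : a₁ ^ 3 ≠ 27 * a₃)
    (hdiv : 3 * ξ ^ 3 + a₁ ^ 2 * ξ ^ 2 + 3 * a₁ * a₃ * ξ + 3 * a₃ ^ 2 = 0) :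
    let d := 3 * a₁ * ξ / (a₁ * ξ + 3 * a₃)
    let M := hessianMatrix ω a₁ a₃ (a₁ + 3 * a₃ / ξ)
    IsUnit M ∧ ∀ P : Fin 3 → K, hessianForm d (M *ᵥ P) = 27 * a₃ * weierstrassForm a₁ a₃ P := by
  have hξ : ξ ≠ 0 := by
    rintro rfl
    exact mul_ne_zero (three_ne_zero_of_isPrimitiveRoot hω) (pow_ne_zero 2 ha₃)
      (by linear_combination hdiv)
  have hcube : (a₁ + 3 * a₃ / ξ) ^ 3 = a₁ ^ 3 - 27 * a₃ := add_three_mul_div_cube_eq hξ hdiv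
  have hc : a₁ + 3 * a₃ / ξ ≠ 0 := by
    rw [← pow_ne_zero_iff three_ne_zero, hcube]
    exact sub_ne_zero.mpr hΔ
  exact ⟨isUnit_hessianMatrix hω ha₃ hc,
    hessianForm_hessianMatrix_mulVec (sq_add_self_add_one_eq_zero_of_isPrimitiveRoot hω) hcube
      (three_mul_div_mul_add_three_mul_div hξ hc)⟩

end Field

/-- The linear change of coordinates `M` takes the Weierstrass cubic
`Y²Z + a₁XYZ + a₃YZ² = X³` to the Hessian cubic `X³ + Y³ + Z³ = dXYZ` with
`d = 3a₁ξ/(a₁ξ + 3a₃)`, where `ξ` is a nonzero root of the 3rd division polynomial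
divided by the variable; moreover `M` is invertible. -/
theorem weierstrass_to_hessian (ω a₁ a₃ ξ : ℂ) (hω : IsPrimitiveRoot ω 3)
    (ha₃ : a₃ ≠ 0) (hΔ : a₁ ^ 3 ≠ 27 * a₃) (hξ : ξ ≠ 0) (hden : a₁ * ξ + 3 * a₃ ≠ 0)
    (hdiv : 3 * ξ ^ 3 + a₁ ^ 2 * ξ ^ 2 + 3 * a₁ * a₃ * ξ + 3 * a₃ ^ 2 = 0) :
    let d : ℂ := 3 * a₁ * ξ / (a₁ * ξ + 3 * a₃)
    let M : Matrix (Fin 3) (Fin 3) ℂ :=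
      !![ω * a₁, 2 * ω + 1, (ω - 1) * a₃;
         -(ω + 1) * a₁, -(2 * ω + 1), (-ω - 2) * a₃;
         a₁ + 3 * a₃ / ξ, 0, 0]
    IsUnit M ∧
      ∀ X Y Z : ℂ, Y ^ 2 * Z + a₁ * (X * Y * Z) + a₃ * (Y * Z ^ 2) = X ^ 3 →
        (M.mulVec ![X, Y, Z] 0) ^ 3 + (M.mulVec ![X, Y, Z] 1) ^ 3 +
            (M.mulVec ![X, Y, Z] 2) ^ 3 =
          d * (M.mulVec ![X, Y, Z] 0 * M.mulVec ![X, Y, Z] 1 * M.mulVec ![X, Y, Z] 2) := by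
  obtain ⟨hM, hform⟩ := weierstrass_to_hessian_general hω ha₃ hΔ hdiv
  exact ⟨hM, fun X Y Z hE ↦ sub_eq_zero.mp <| (hform _).trans <| by simp [weierstrassForm, hE]⟩
end

section
/- Let d ∈ ℂ and let W_d be the Weierstrass curve over ℂ given by Y² + (d/3)XY + ((d³−27)/3⁶)Y = X³ (coefficients a₁ = d/3, a₂ = 0, a₃ = (d³−27)/3⁶, a₄ = 0, a₆ = 0). Then the discriminant of W_d equals ((d³ − 27)/3⁶)³; hence W_d is an elliptic curve if and only if d³ ≠ 27, and in that case its j-invariant equals d³(d³ + 216)³/(d³ − 27)³. -/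
/-!
The curve `Y² + aXY + bY = X³` has `Δ = b³(a³ - 27b)` and `c₄ = a(a³ - 24b)`. For the Hessian
parameters `a = d/3` and `b = (d³ - 27)/3⁶` one has `a³ - 27b = 1`, so that `Δ = b³` and
`c₄ = a(1 + 3b)`.
-/

section ThreeTorsion

variable {R : Type*} [CommRing R]

/-- The Weierstrass curve `Y² + aXY + bY = X³`. When it is nonsingular, the origin is a point of
order three with tangent line `Y = 0`; the Hessian Weierstrass model is taken from this family. -/
def threeTorsionCurve (a b : R) : WeierstrassCurve R := ⟨a, 0, b, 0, 0⟩

lemma threeTorsionCurve_Δ (a b : R) :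
    (threeTorsionCurve a b).Δ = b ^ 3 * (a ^ 3 - 27 * b) := by
  simp only [threeTorsionCurve, WeierstrassCurve.Δ, WeierstrassCurve.b₂, WeierstrassCurve.b₄,
    WeierstrassCurve.b₆, WeierstrassCurve.b₈]
  ring

lemma threeTorsionCurve_c₄ (a b : R) :
    (threeTorsionCurve a b).c₄ = a * (a ^ 3 - 24 * b) := by
  simp only [threeTorsionCurve, WeierstrassCurve.c₄, WeierstrassCurve.b₂, WeierstrassCurve.b₄]
  ring

end ThreeTorsion

section Hessian

variable {F : Type*} [Field F]

/-- The Weierstrass model `Y² + (d/3)XY + ((d³ - 27)/3⁶)Y = X³` of the Hessian curve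
`X³ + Y³ + Z³ = dXYZ`. It is meaningful only when `3 ≠ 0` in `F`: in characteristic three both
coefficients are divisions by zero. -/
def hessianCurve (d : F) : WeierstrassCurve F :=
  threeTorsionCurve (d / 3) ((d ^ 3 - 27) / 3 ^ 6)

lemma hessian_coeff_relation (h3 : (3 : F) ≠ 0) (d : F) :
    (d / 3) ^ 3 - 27 * ((d ^ 3 - 27) / 3 ^ 6) = 1 := by
  field_simp
  ring

lemma hessianCurve_Δ (h3 : (3 : F) ≠ 0) (d : F) :
    (hessianCurve d).Δ = ((d ^ 3 - 27) / 3 ^ 6) ^ 3 := by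
  rw [hessianCurve, threeTorsionCurve_Δ, hessian_coeff_relation h3, mul_one]

lemma hessianCurve_c₄ (h3 : (3 : F) ≠ 0) (d : F) :
    (hessianCurve d).c₄ = d * (d ^ 3 + 216) / 3 ^ 6 := by
  set b : F := (d ^ 3 - 27) / 3 ^ 6 with hb
  calc
    (hessianCurve d).c₄ = d / 3 * ((d / 3) ^ 3 - 24 * b) := threeTorsionCurve_c₄ _ _
    _ = d / 3 * (1 + 3 * b) := by
      linear_combination d / 3 * hessian_coeff_relation h3 d
    _ = d * (d ^ 3 + 216) / 3 ^ 6 := by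
      rw [hb]
      field_simp
      ring

lemma hessianCurve_isElliptic_iff (h3 : (3 : F) ≠ 0) (d : F) :
    (hessianCurve d).IsElliptic ↔ d ^ 3 ≠ 27 := by
  rw [WeierstrassCurve.isElliptic_iff, isUnit_iff_ne_zero, hessianCurve_Δ h3,
    pow_ne_zero_iff three_ne_zero, div_ne_zero_iff, sub_ne_zero]
  exact and_iff_left (pow_ne_zero 6 h3)

lemma hessianCurve_c₄_pow_div_Δ (h3 : (3 : F) ≠ 0) {d : F} (hd : d ^ 3 ≠ 27) :
    (hessianCurve d).c₄ ^ 3 / (hessianCurve d).Δ =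
      d ^ 3 * (d ^ 3 + 216) ^ 3 / (d ^ 3 - 27) ^ 3 := by
  have hd' : d ^ 3 - 27 ≠ 0 := sub_ne_zero.mpr hd
  rw [hessianCurve_c₄ h3, hessianCurve_Δ h3]
  field_simp

theorem hessian_discriminant_j_general (h3 : (3 : F) ≠ 0) (d : F) :
    (hessianCurve d).Δ = ((d ^ 3 - 27) / 3 ^ 6) ^ 3 ∧
      ((hessianCurve d).IsElliptic ↔ d ^ 3 ≠ 27) ∧
      (d ^ 3 ≠ 27 → (hessianCurve d).c₄ ^ 3 / (hessianCurve d).Δ =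
        d ^ 3 * (d ^ 3 + 216) ^ 3 / (d ^ 3 - 27) ^ 3) :=
  ⟨hessianCurve_Δ h3 d, hessianCurve_isElliptic_iff h3 d, hessianCurve_c₄_pow_div_Δ h3⟩

end Hessian

/-- The Weierstrass curve `Y² + (d/3)XY + ((d³−27)/3⁶)Y = X³` over `ℂ` has discriminant
`((d³ − 27)/3⁶)³`; it is an elliptic curve iff `d³ ≠ 27`, and in that case its j-invariant
`c₄³/Δ` equals `d³(d³ + 216)³/(d³ − 27)³`. -/
theorem hessian_discriminant_j (d : ℂ) :
    let W : WeierstrassCurve ℂ := ⟨d / 3, 0, (d ^ 3 - 27) / 3 ^ 6, 0, 0⟩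
    W.Δ = ((d ^ 3 - 27) / 3 ^ 6) ^ 3 ∧
      (W.IsElliptic ↔ d ^ 3 ≠ 27) ∧
      (d ^ 3 ≠ 27 → W.c₄ ^ 3 / W.Δ = d ^ 3 * (d ^ 3 + 216) ^ 3 / (d ^ 3 - 27) ^ 3) :=
  hessian_discriminant_j_general three_ne_zero d
end

section
/- Let J₀, J₁ ∈ ℤ[X] with deg J₁ > deg J₀, and let c ∈ ℤ be the leading coefficient of J₁. Let A be a commutative ring and x, y ∈ A such that the image of c is invertible in A and J₁(x) = y·J₀(x) (evaluating the integer polynomials at x in A). Then x is integral over the subring of A generated by c⁻¹ and y (the image of ℤ[c⁻¹, y]). -/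
open Polynomial

/-! Over a ring containing `c⁻¹` and `y`, the polynomial `c⁻¹ (J₁ - y J₀)` is monic, because
`deg J₀ < deg J₁`, and it vanishes at `x`. -/

section

variable {R A : Type*} [CommRing R] [Ring A] [Algebra R A] {p q : R[X]} {x : A}

theorem isIntegral_of_isUnit_leadingCoeff_of_aeval_eq_zero (hp : IsUnit p.leadingCoeff)
    (hx : aeval x p = 0) : IsIntegral R x := by
  refine ⟨hp.unit⁻¹ • p, monic_of_isUnit_leadingCoeff_inv_smul hp, ?_⟩
  rw [← aeval_def, Units.smul_def, map_smul, hx, smul_zero]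

theorem isIntegral_of_degree_lt_of_aeval_eq_aeval (hp : IsUnit p.leadingCoeff)
    (hdeg : q.degree < p.degree) (hx : aeval x p = aeval x q) : IsIntegral R x :=
  isIntegral_of_isUnit_leadingCoeff_of_aeval_eq_zero (p := p - q)
    (by rwa [leadingCoeff_sub_of_degree_lt hdeg]) (by rw [map_sub, hx, sub_self])

end

theorem isIntegral_of_degree_lt_of_aeval_eq_smul_aeval {R B A : Type*} [CommSemiring R]
    [CommRing B] [Ring A] [Algebra R B] [Algebra B A] [Algebra R A] [IsScalarTower R B A]
    {p q : R[X]} {x : A} {b : B}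
    (hp : IsUnit (algebraMap R B p.leadingCoeff)) (hdeg : q.degree < p.degree)
    (hx : aeval x p = b • aeval x q) : IsIntegral B x := by
  cases subsingleton_or_nontrivial B
  · exact ⟨1, monic_one, (Module.subsingleton B A).elim _ _⟩
  have hlead : (p.map (algebraMap R B)).leadingCoeff = algebraMap R B p.leadingCoeff :=
    leadingCoeff_map_of_leadingCoeff_ne_zero _ hp.ne_zero
  refine isIntegral_of_degree_lt_of_aeval_eq_aeval
    (p := p.map (algebraMap R B)) (q := b • q.map (algebraMap R B)) (hlead ▸ hp) ?_ ?_
  · calc (b • q.map (algebraMap R B)).degree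
        ≤ (q.map (algebraMap R B)).degree := degree_smul_le _ _
      _ ≤ q.degree := degree_map_le
      _ < p.degree := hdeg
      _ = (p.map (algebraMap R B)).degree :=
        (degree_map_eq_of_leadingCoeff_ne_zero _ hp.ne_zero).symm
  · rw [map_smul, aeval_map_algebraMap, aeval_map_algebraMap, hx]

theorem integral_over_inv_leadingCoeff_general {R A : Type*} [CommRing R] [CommRing A]
    [Algebra R A] {J₀ J₁ : R[X]} (hdeg : J₀.degree < J₁.degree) {x y : A}
    (hc : IsUnit (algebraMap R A J₁.leadingCoeff))
    (heq : aeval x J₁ = y * aeval x J₀) :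
    IsIntegral (Algebra.adjoin R {(↑hc.unit⁻¹ : A), y}) x := by
  let B := Algebra.adjoin R {(↑hc.unit⁻¹ : A), y}
  have hinv : ↑hc.unit⁻¹ ∈ B := Algebra.subset_adjoin (by simp)
  have hy : y ∈ B := Algebra.subset_adjoin (by simp)
  have hunit : IsUnit (algebraMap R B J₁.leadingCoeff) :=
    .of_mul_eq_one ⟨_, hinv⟩ (Subtype.ext hc.mul_val_inv)
  exact isIntegral_of_degree_lt_of_aeval_eq_smul_aeval (b := (⟨y, hy⟩ : B)) hunit hdeg heq

/-- Let `J₀, J₁ ∈ ℤ[X]` with `deg J₁ > deg J₀` and leading coefficient `c` of `J₁`. If in a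
commutative ring `A` the image of `c` is invertible and `J₁(x) = y·J₀(x)`, then `x` is
integral over the subring of `A` generated by `c⁻¹` and `y`. -/
theorem integral_over_inv_leadingCoeff (J₀ J₁ : Polynomial ℤ)
    (hdeg : J₀.degree < J₁.degree) (A : Type*) [CommRing A] (x y : A)
    (hc : IsUnit ((Int.cast (J₁.leadingCoeff) : A)))
    (heq : Polynomial.aeval x J₁ = y * Polynomial.aeval x J₀) :
    IsIntegral (Subring.closure {(↑hc.unit⁻¹ : A), y}) x := by
  have h := integral_over_inv_leadingCoeff_general hdeg hc heq
  rwa [Algebra.adjoin_int] at h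
end
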